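/- Let n ≥ 1, s, s̃ ∈ ℝ, 0 < p < ∞ and 0 < q, r ≤ ∞ satisfy s < s̃ and s/n + 1/q = s̃/n + 1/p. Then there exists a constant C such that for every measurable function f on ℝⁿ, ‖f‖_{K̇^s_{q,r}} ≤ C·‖f‖_{L^{p,r}_{s̃}}; that is, the power-weighted Lorentz space L^{p,r}_{s̃}(ℝⁿ) embeds continuously into the Herz space K̇^s_{q,r}(ℝⁿ). -/

import Mathlib

open MeasureTheory Set ENNReal Filter

noncomputable section

abbrev Euc (n : ℕ) : Type := EuclideanSpace ℝ (Fin n)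

def annulus (n : ℕ) (j : ℤ) : Set (Euc n) :=
  {x : Euc n | (2 : ℝ) ^ (j - 1) ≤ ‖x‖ ∧ ‖x‖ < (2 : ℝ) ^ j}

def herzNorm (n : ℕ) (s : ℝ) (q r : ℝ≥0∞) (f : Euc n → ℝ) : ℝ≥0∞ :=
  if r = ⊤ then
    ⨆ j : ℤ, ENNReal.ofReal ((2 : ℝ) ^ ((j : ℝ) * s)) *
      eLpNorm ((annulus n j).indicator f) q volume
  else
    (∑' j : ℤ, (ENNReal.ofReal ((2 : ℝ) ^ ((j : ℝ) * s)) *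
      eLpNorm ((annulus n j).indicator f) q volume) ^ r.toReal) ^ (1 / r.toReal)

/-- The decreasing rearrangement `f*(t) = inf {λ > 0 : |{x : |f x| > λ}| ≤ t}`. -/
def decRearrangement (n : ℕ) (f : Euc n → ℝ) (t : ℝ) : ℝ≥0∞ :=
  sInf {l : ℝ≥0∞ | 0 < l ∧ volume {x : Euc n | l < (‖f x‖₊ : ℝ≥0∞)} ≤ ENNReal.ofReal t}

/-- The Lorentz quasi-norm `‖f‖_{L^{p,r}}`. -/
def lorentzNorm (n : ℕ) (p : ℝ) (r : ℝ≥0∞) (f : Euc n → ℝ) : ℝ≥0∞ :=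
  if r = ⊤ then
    ⨆ (t : ℝ) (_ : 0 < t), ENNReal.ofReal (t ^ (1 / p)) * decRearrangement n f t
  else
    (∫⁻ t in Set.Ioi (0 : ℝ),
      (ENNReal.ofReal (t ^ (1 / p)) * decRearrangement n f t) ^ r.toReal *
        ENNReal.ofReal t⁻¹) ^ (1 / r.toReal)

/-- The power-weighted Lorentz quasi-norm `‖f‖_{L^{p,r}_{s}} = ‖|·|^s f‖_{L^{p,r}}`. -/
def lorentzNormW (n : ℕ) (s : ℝ) (p : ℝ) (r : ℝ≥0∞) (f : Euc n → ℝ) : ℝ≥0∞ :=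
  lorentzNorm n p r (fun x => ‖x‖ ^ s * f x)

/-!
On the annulus `A_j` the weight `|x|^s̃` is comparable to `2^(j s̃)`, so with `g = |·|^s̃ f` it is
enough to bound the Herz norm of `g` of order `s - s̃ = -nσ`, where `σ > 0` and `1/q = σ + 1/p`.
Put `ρ = 2^n`, `ω = |B(0, 1)|`, `v = ω ρ^j` and `F(t) = t^(1/p) g*(t)`, the profile whose
`L^r(dt/t)` quasi-norm is the Lorentz quasi-norm of `g`. Since `|A_j| ≤ v`, cutting `A_j` at the
levels `g*(v/ρ^m)`, `m ≥ 1`, gives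

  `∫_{A_j} |g|^q ≤ ρ ∑_m (v/ρ^m) g*(v/ρ^m)^q = ρ ∑_m ((v/ρ^m)^σ F(v/ρ^m))^q`.

Half of the decay `ρ^(-σm)` pays for the convergence of the sum, and the other half remains in

  `‖g‖_{L^q(A_j)} ≤ C v^σ sup_m ρ^(-σm/2) F(ω ρ^(j-m))`.

The factor `v^σ` cancels the Herz weight `2^(-jnσ)`, a supremum with geometric weights is bounded
on `ℓ^r(ℤ)`, and, as `g*` decreases, the `ℓ^r` quasi-norm of the samples `F(ω ρ^k)` is controlled by
the Lorentz quasi-norm.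
-/

open scoped NNReal Topology

/-- The function `t ↦ t ^ (1 / p) * f*(t)`, of which the Lorentz quasi-norm `‖f‖_{L^{p,r}}` is the
`L^r` quasi-norm with respect to `dt / t`. -/
def lorentzProfile (n : ℕ) (p : ℝ) (f : Euc n → ℝ) (t : ℝ) : ℝ≥0∞ :=
  ENNReal.ofReal (t ^ (1 / p)) * decRearrangement n f t

section GeometricSequences

lemma tsum_geometric_rpow_ne_top {θ : ℝ≥0∞} (hθ : θ < 1) {Q : ℝ} (hQ : 0 < Q) :
    ∑' m : ℕ, (θ ^ (m + 1)) ^ Q ≠ ∞ := by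
  have hθQ : θ ^ Q < 1 := ENNReal.rpow_lt_one hθ hQ
  have hcomm (m : ℕ) : (θ ^ (m + 1)) ^ Q = (θ ^ Q) ^ (m + 1) := by
    rw [← ENNReal.rpow_natCast_mul, ← ENNReal.rpow_mul_natCast, mul_comm]
  simp_rw [hcomm, ENNReal.tsum_geometric_add_one]
  exact ENNReal.mul_ne_top (hθQ.trans_le le_top).ne (ENNReal.inv_ne_top.2 (tsub_pos_of_lt hθQ).ne')

lemma tsum_mul_mul_rpow_le {ι : Type*} (w c : ι → ℝ≥0∞) {Q : ℝ} (hQ : 0 ≤ Q) :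
    ∑' i, (w i * (w i * c i)) ^ Q ≤ (∑' i, w i ^ Q) * (⨆ i, w i * c i) ^ Q := by
  rw [← ENNReal.tsum_mul_right]
  refine ENNReal.tsum_le_tsum fun i ↦ ?_
  rw [ENNReal.mul_rpow_of_nonneg _ _ hQ]
  gcongr
  exact le_iSup (fun i ↦ w i * c i) i

lemma iSup_rpow_le_tsum_rpow {ι : Type*} (a : ι → ℝ≥0∞) {R : ℝ} (hR : 0 < R) :
    (⨆ i, a i) ^ R ≤ ∑' i, a i ^ R := by
  rw [← ENNReal.le_rpow_inv_iff hR]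
  exact iSup_le fun i ↦ (ENNReal.le_rpow_inv_iff hR).2 (ENNReal.le_tsum i)

lemma eLpNorm_count_eq_tsum {ι : Type*} [MeasurableSpace ι] [MeasurableSingletonClass ι]
    (b : ι → ℝ≥0∞) {r : ℝ≥0∞} (hr₀ : r ≠ 0) (hr : r ≠ ∞) :
    eLpNorm b r Measure.count = (∑' i, b i ^ r.toReal) ^ (1 / r.toReal) := by
  simp only [eLpNorm_eq_lintegral_rpow_enorm_toReal hr₀ hr, lintegral_count, enorm_eq_self]

lemma eLpNorm_top_count {ι : Type*} [MeasurableSpace ι] [MeasurableSingletonClass ι]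
    (b : ι → ℝ≥0∞) : eLpNorm b ∞ Measure.count = ⨆ i, b i := by
  simp

lemma eLpNorm_count_le_mul {ι : Type*} [MeasurableSpace ι] {a b : ι → ℝ≥0∞} {c : ℝ≥0}
    (hab : ∀ i, a i ≤ c * b i) (r : ℝ≥0∞) :
    eLpNorm a r Measure.count ≤ c * eLpNorm b r Measure.count :=
  eLpNorm_le_mul_eLpNorm_of_ae_le_mul' (.of_forall hab) r

lemma tsum_iSup_geometric_rpow_le (b : ℤ → ℝ≥0∞) (θ : ℝ≥0∞) {R : ℝ} (hR : 0 < R) :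
    ∑' j : ℤ, (⨆ m : ℕ, θ ^ (m + 1) * b (j - (m + 1))) ^ R ≤
      (∑' m : ℕ, (θ ^ (m + 1)) ^ R) * ∑' j, b j ^ R :=
  calc ∑' j : ℤ, (⨆ m : ℕ, θ ^ (m + 1) * b (j - (m + 1))) ^ R
      ≤ ∑' (j : ℤ) (m : ℕ), (θ ^ (m + 1)) ^ R * b (j - (m + 1)) ^ R := by
        refine ENNReal.tsum_le_tsum fun j ↦ (iSup_rpow_le_tsum_rpow _ hR).trans_eq ?_
        simp only [ENNReal.mul_rpow_of_nonneg _ _ hR.le]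
    _ = ∑' m : ℕ, (θ ^ (m + 1)) ^ R * ∑' j : ℤ, b (j - (m + 1)) ^ R := by
        simp only [ENNReal.tsum_comm (α := ℤ), ENNReal.tsum_mul_left]
    _ = (∑' m : ℕ, (θ ^ (m + 1)) ^ R) * ∑' j, b j ^ R := by
        rw [← ENNReal.tsum_mul_right]
        congr! 3 with m
        exact (Equiv.subRight ((m : ℤ) + 1)).tsum_eq fun j ↦ b j ^ R

lemma exists_eLpNorm_count_iSup_geometric_le {θ : ℝ≥0∞} (hθ : θ < 1) (r : ℝ≥0∞) :
    ∃ C : ℝ≥0, ∀ b : ℤ → ℝ≥0∞,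
      eLpNorm (fun j : ℤ ↦ ⨆ m : ℕ, θ ^ (m + 1) * b (j - (m + 1))) r Measure.count ≤
        C * eLpNorm b r Measure.count := by
  rcases eq_or_ne r 0 with rfl | hr₀
  · exact ⟨0, by simp⟩
  rcases eq_or_ne r ∞ with rfl | hr
  · refine ⟨1, fun b ↦ ?_⟩
    simp only [eLpNorm_top_count, ENNReal.coe_one, one_mul]
    exact iSup_le fun j ↦ iSup_le fun m ↦
      (mul_le_of_le_one_left' (pow_le_one' hθ.le _)).trans (le_iSup b _)
  · have hR := ENNReal.toReal_pos hr₀ hr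
    have hsum := tsum_geometric_rpow_ne_top hθ hR
    lift (∑' m : ℕ, (θ ^ (m + 1)) ^ r.toReal) ^ (1 / r.toReal) to ℝ≥0
      using by finiteness with C hC
    refine ⟨C, fun b ↦ ?_⟩
    rw [hC, eLpNorm_count_eq_tsum _ hr₀ hr, eLpNorm_count_eq_tsum _ hr₀ hr,
      ← ENNReal.mul_rpow_of_nonneg _ _ (by positivity)]
    gcongr
    exact tsum_iSup_geometric_rpow_le b θ hR

end GeometricSequences

section Layers

variable {α : Type*} [MeasurableSpace α] {μ : Measure α} {g : α → ℝ≥0∞} {L τ : ℕ → ℝ≥0∞}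

lemma ae_exists_le_of_measure_lt_le (hL : ∀ m, μ {x | L m < g x} ≤ τ m)
    (hτ : Tendsto τ atTop (𝓝 0)) : ∀ᵐ x ∂μ, ∃ m, g x ≤ L m := by
  simp only [ae_iff, not_exists, not_le]
  refine le_antisymm (ge_of_tendsto' hτ fun m ↦ ?_) zero_le
  exact (measure_mono <| ofPred_subset_ofPred.2 fun _ hx ↦ hx m).trans (hL m)

lemma setLIntegral_le_tsum_of_measure_lt_le (hg : Measurable g) {A : Set α} (hA : MeasurableSet A)
    (hτA : μ A ≤ τ 0) (hL : ∀ m, μ {x | L m < g x} ≤ τ (m + 1))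
    (hτ : Tendsto τ atTop (𝓝 0)) : ∫⁻ x in A, g x ∂μ ≤ ∑' m, L m * τ m := by
  let E : ℕ → Set α
    | 0 => A
    | m + 1 => {x | L m < g x}
  have hE : ∀ m, MeasurableSet (E m)
    | 0 => hA
    | m + 1 => measurableSet_lt measurable_const hg
  have hτE : ∀ m, μ (E m) ≤ τ m
    | 0 => hτA
    | m + 1 => hL m
  have g_le : ∀ᵐ x ∂μ, x ∈ A → g x ≤ ∑' m, (E m).indicator (fun _ ↦ L m) x := by
    filter_upwards [ae_exists_le_of_measure_lt_le hL (hτ.comp (tendsto_add_atTop_nat 1))]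
      with x hx hxA
    classical
    have hxE : x ∈ E (Nat.find hx) := by
      rcases h : Nat.find hx with _ | m
      · exact hxA
      · exact not_le.1 (Nat.find_min hx (h ▸ m.lt_succ_self))
    calc g x ≤ (E (Nat.find hx)).indicator (fun _ ↦ L (Nat.find hx)) x := by
          rw [indicator_of_mem hxE]
          exact Nat.find_spec hx
      _ ≤ ∑' m, (E m).indicator (fun _ ↦ L m) x := ENNReal.le_tsum _
  calc ∫⁻ x in A, g x ∂μ
      ≤ ∫⁻ x in A, ∑' m, (E m).indicator (fun _ ↦ L m) x ∂μ :=
        lintegral_mono_ae ((ae_restrict_iff' hA).2 g_le)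
    _ ≤ ∫⁻ x, ∑' m, (E m).indicator (fun _ ↦ L m) x ∂μ := setLIntegral_le_lintegral _ _
    _ = ∑' m, L m * μ (E m) := by
        rw [lintegral_tsum fun m ↦ (measurable_const.indicator (hE m)).aemeasurable]
        simp only [lintegral_indicator_const (hE _)]
    _ ≤ ∑' m, L m * τ m := by
        gcongr
        exact hτE _

end Layers

section DyadicIntegral

lemma mul_tsum_le_lintegral_inv {ω ρ : ℝ} (hω : 0 < ω) (hρ : 1 ≤ ρ) {a : ℤ → ℝ≥0∞}
    {F : ℝ → ℝ≥0∞} (haF : ∀ k, ∀ t ∈ Ioc (ω * ρ ^ (k - 1)) (ω * ρ ^ k), a k ≤ F t) :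
    ENNReal.ofReal (1 - ρ⁻¹) * ∑' k, a k ≤ ∫⁻ t in Ioi (0 : ℝ), F t * ENNReal.ofReal t⁻¹ := by
  have hρ₀ : 0 < ρ := one_pos.trans_le hρ
  let I : ℤ → Set ℝ := fun k ↦ Ioc (ω * ρ ^ (k - 1)) (ω * ρ ^ k)
  have I_pos {k : ℤ} {t : ℝ} (ht : t ∈ I k) : 0 < t := lt_trans (by positivity) ht.1
  have I_disjoint : Pairwise (Function.onFun Disjoint I) :=
    ((zpow_right_mono₀ hρ).const_mul hω.le).pairwise_disjoint_on_Ioc_pred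
  have le_lintegral_I (k : ℤ) :
      ENNReal.ofReal (1 - ρ⁻¹) * a k ≤ ∫⁻ t in I k, F t * ENNReal.ofReal t⁻¹ :=
    calc ENNReal.ofReal (1 - ρ⁻¹) * a k
        = ∫⁻ _ in I k, a k * ENNReal.ofReal (ω * ρ ^ k)⁻¹ := by
          rw [setLIntegral_const, Real.volume_Ioc, mul_assoc, mul_comm,
            ← ENNReal.ofReal_mul (by positivity), zpow_sub_one₀ hρ₀.ne']
          congr 2
          field_simp
      _ ≤ ∫⁻ t in I k, F t * ENNReal.ofReal t⁻¹ := by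
          refine setLIntegral_mono' measurableSet_Ioc fun t ht ↦ ?_
          have := I_pos ht
          gcongr
          · exact haF k t ht
          · exact ht.2
  calc ENNReal.ofReal (1 - ρ⁻¹) * ∑' k, a k
      ≤ ∑' k, ∫⁻ t in I k, F t * ENNReal.ofReal t⁻¹ := by
        rw [← ENNReal.tsum_mul_left]
        exact ENNReal.tsum_le_tsum le_lintegral_I
    _ = ∫⁻ t in ⋃ k, I k, F t * ENNReal.ofReal t⁻¹ :=
        (lintegral_iUnion (fun _ ↦ measurableSet_Ioc) I_disjoint _).symm
    _ ≤ ∫⁻ t in Ioi (0 : ℝ), F t * ENNReal.ofReal t⁻¹ :=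
        lintegral_mono_set (iUnion_subset fun _ _ ↦ I_pos)

end DyadicIntegral

section Lorentz

variable {n : ℕ} {p : ℝ}

lemma volume_decRearrangement_lt_le (g : Euc n → ℝ) (t : ℝ) :
    volume {x | decRearrangement n g t < ‖g x‖ₑ} ≤ ENNReal.ofReal t := by
  set a := decRearrangement n g t
  rcases eq_or_ne a ∞ with ha | ha
  · simp [ha]
  obtain ⟨u, hu_anti, hu_mem, hu_lim⟩ := exists_seq_strictAnti_tendsto' (lt_top_iff_ne_top.2 ha)
  have hunion : {x | a < ‖g x‖ₑ} = ⋃ k, {x | u k < ‖g x‖ₑ} := by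
    ext x
    simp only [mem_ofPred_eq, mem_iUnion]
    exact ⟨fun hx ↦ (hu_lim.eventually (gt_mem_nhds hx)).exists,
      fun ⟨k, hk⟩ ↦ (hu_mem k).1.trans hk⟩
  have hmono : Monotone fun k ↦ {x | u k < ‖g x‖ₑ} :=
    fun _ _ hij _ hx ↦ (hu_anti.antitone hij).trans_lt hx
  rw [hunion, hmono.measure_iUnion]
  refine iSup_le fun k ↦ ?_
  obtain ⟨l, ⟨-, hl⟩, hlu⟩ := sInf_lt_iff.1 (hu_mem k).1
  exact (measure_mono fun x hx ↦ hlu.trans hx).trans hl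

lemma decRearrangement_antitone (g : Euc n → ℝ) : Antitone (decRearrangement n g) :=
  fun _ _ hab ↦ sInf_le_sInf fun _ hl ↦ ⟨hl.1, hl.2.trans (ENNReal.ofReal_le_ofReal hab)⟩

lemma lorentzNorm_top (g : Euc n → ℝ) :
    lorentzNorm n p ∞ g = ⨆ (t : ℝ) (_ : 0 < t), lorentzProfile n p g t :=
  if_pos rfl

lemma lorentzNorm_of_ne_top {r : ℝ≥0∞} (hr : r ≠ ∞) (g : Euc n → ℝ) :
    lorentzNorm n p r g = (∫⁻ t in Ioi (0 : ℝ),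
      lorentzProfile n p g t ^ r.toReal * ENNReal.ofReal t⁻¹) ^ (1 / r.toReal) :=
  if_neg hr

lemma lorentzProfile_le_mul (hp : 0 ≤ p) (g : Euc n → ℝ) {ρ t u : ℝ} (hρ : 0 ≤ ρ) (ht : 0 ≤ t)
    (htu : t ≤ u) (hut : u ≤ ρ * t) :
    lorentzProfile n p g u ≤ ENNReal.ofReal (ρ ^ (1 / p)) * lorentzProfile n p g t := by
  have hu : 0 ≤ u := ht.trans htu
  rw [lorentzProfile, lorentzProfile, ← mul_assoc, ← ENNReal.ofReal_mul (by positivity),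
    ← Real.mul_rpow hρ ht]
  gcongr
  exact decRearrangement_antitone g htu

lemma tsum_lorentzProfile_rpow_le (hp : 0 ≤ p) (g : Euc n → ℝ) {ω ρ R : ℝ} (hω : 0 < ω)
    (hρ : 1 < ρ) (hR : 0 ≤ R) :
    ∑' k : ℤ, lorentzProfile n p g (ω * ρ ^ k) ^ R ≤
      (ENNReal.ofReal (1 - ρ⁻¹))⁻¹ * ENNReal.ofReal (ρ ^ (1 / p)) ^ R *
        ∫⁻ t in Ioi (0 : ℝ), lorentzProfile n p g t ^ R * ENNReal.ofReal t⁻¹ := by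
  have hρ₀ : 0 < ρ := one_pos.trans hρ
  have hκ : ENNReal.ofReal (1 - ρ⁻¹) ≠ 0 := by
    simpa using inv_lt_one_of_one_lt₀ hρ
  set D := ENNReal.ofReal (ρ ^ (1 / p))
  have profile_le (k : ℤ) (t : ℝ) (ht : t ∈ Ioc (ω * ρ ^ (k - 1)) (ω * ρ ^ k)) :
      lorentzProfile n p g (ω * ρ ^ k) ^ R ≤ D ^ R * lorentzProfile n p g t ^ R := by
    rw [← ENNReal.mul_rpow_of_nonneg _ _ hR]
    refine ENNReal.rpow_le_rpow (lorentzProfile_le_mul hp g hρ₀.le ?_ ht.2 ?_) hR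
    · exact le_trans (by positivity) ht.1.le
    · calc ω * ρ ^ k = ρ * (ω * ρ ^ (k - 1)) := by
            rw [zpow_sub_one₀ hρ₀.ne']
            field_simp
        _ ≤ ρ * t := by
            gcongr
            exact ht.1.le
  have hsum := mul_tsum_le_lintegral_inv hω hρ.le profile_le
  simp only [mul_assoc] at hsum ⊢
  rw [lintegral_const_mul' _ _ (by finiteness)] at hsum
  rwa [mul_comm _⁻¹, ← div_eq_mul_inv, ENNReal.le_div_iff_mul_le (.inl hκ) (.inl ofReal_ne_top),
    mul_comm]

lemma exists_eLpNorm_count_lorentzProfile_le (n : ℕ) (hp : 0 ≤ p) (r : ℝ≥0∞) {ω ρ : ℝ}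
    (hω : 0 < ω) (hρ : 1 < ρ) :
    ∃ C : ℝ≥0, ∀ g : Euc n → ℝ,
      eLpNorm (fun k : ℤ ↦ lorentzProfile n p g (ω * ρ ^ k)) r Measure.count ≤
        C * lorentzNorm n p r g := by
  rcases eq_or_ne r 0 with rfl | hr₀
  · exact ⟨0, by simp⟩
  rcases eq_or_ne r ∞ with rfl | hr
  · refine ⟨1, fun g ↦ ?_⟩
    rw [eLpNorm_top_count, lorentzNorm_top, ENNReal.coe_one, one_mul]
    refine iSup_le fun k ↦ le_iSup₂_of_le (ω * ρ ^ k) ?_ le_rfl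
    exact mul_pos hω (zpow_pos (one_pos.trans hρ) k)
  · have hR := ENNReal.toReal_pos hr₀ hr
    have hκ : ENNReal.ofReal (1 - ρ⁻¹) ≠ 0 := by simpa using inv_lt_one_of_one_lt₀ hρ
    lift ((ENNReal.ofReal (1 - ρ⁻¹))⁻¹ * ENNReal.ofReal (ρ ^ (1 / p)) ^ r.toReal) ^ (1 / r.toReal)
      to ℝ≥0 using by finiteness with C hC
    refine ⟨C, fun g ↦ ?_⟩
    rw [hC, eLpNorm_count_eq_tsum _ hr₀ hr, lorentzNorm_of_ne_top hr,
      ← ENNReal.mul_rpow_of_nonneg _ _ (by positivity)]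
    gcongr
    exact tsum_lorentzProfile_rpow_le hp g hω hρ hR.le

lemma lorentzProfile_eq_rpow_mul {σ Q : ℝ} (hQ : 1 / Q = σ + 1 / p) (g : Euc n → ℝ) {t : ℝ}
    (ht : 0 < t) : lorentzProfile n Q g t = ENNReal.ofReal (t ^ σ) * lorentzProfile n p g t := by
  rw [lorentzProfile, lorentzProfile, hQ, Real.rpow_add ht, ENNReal.ofReal_mul (by positivity),
    mul_assoc]

lemma lorentzProfile_self_rpow {Q t : ℝ} (hQ : 0 < Q) (ht : 0 < t) (g : Euc n → ℝ) :
    lorentzProfile n Q g t ^ Q = decRearrangement n g t ^ Q * ENNReal.ofReal t := by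
  rw [lorentzProfile, ENNReal.mul_rpow_of_nonneg _ _ hQ.le,
    ENNReal.ofReal_rpow_of_nonneg (by positivity) hQ.le, ← Real.rpow_mul ht.le,
    one_div_mul_cancel hQ.ne', Real.rpow_one, mul_comm]

lemma setLIntegral_enorm_rpow_le_tsum_lorentzProfile {g : Euc n → ℝ} (hg : Measurable g)
    {A : Set (Euc n)} (hA : MeasurableSet A) {v ρ Q : ℝ} (hv : 0 < v) (hρ : 1 < ρ) (hQ : 0 < Q)
    (hvA : volume A ≤ ENNReal.ofReal v) :
    ∫⁻ x in A, ‖g x‖ₑ ^ Q ≤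
      ENNReal.ofReal ρ * ∑' m : ℕ, lorentzProfile n Q g (v / ρ ^ (m + 1)) ^ Q := by
  have hρ₀ : 0 < ρ := one_pos.trans hρ
  let L : ℕ → ℝ≥0∞ := fun m ↦ decRearrangement n g (v / ρ ^ (m + 1)) ^ Q
  have volume_lt_le (m : ℕ) :
      volume {x | L m < ‖g x‖ₑ ^ Q} ≤ ENNReal.ofReal (v / ρ ^ (m + 1)) := by
    simpa only [L, ENNReal.rpow_lt_rpow_iff hQ] using volume_decRearrangement_lt_le g _
  have tendsto_volume : Tendsto (fun m : ℕ ↦ ENNReal.ofReal (v / ρ ^ m)) atTop (𝓝 0) := by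
    simpa using ENNReal.tendsto_ofReal
      (tendsto_const_nhds.div_atTop (tendsto_pow_atTop_atTop_of_one_lt hρ))
  calc ∫⁻ x in A, ‖g x‖ₑ ^ Q
      ≤ ∑' m, L m * ENNReal.ofReal (v / ρ ^ m) :=
        setLIntegral_le_tsum_of_measure_lt_le (hg.enorm.pow_const Q) hA (by simpa using hvA)
          volume_lt_le tendsto_volume
    _ = ENNReal.ofReal ρ * ∑' m : ℕ, lorentzProfile n Q g (v / ρ ^ (m + 1)) ^ Q := by
        rw [← ENNReal.tsum_mul_left]
        refine tsum_congr fun m ↦ ?_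
        have hvρ : v / ρ ^ m = ρ * (v / ρ ^ (m + 1)) := by
          rw [pow_succ]
          field_simp
        rw [lorentzProfile_self_rpow hQ (by positivity), hvρ, ENNReal.ofReal_mul hρ₀.le]
        ring

lemma ofReal_div_pow_rpow {v ρ : ℝ} (hv : 0 ≤ v) (hρ : 0 ≤ ρ) (σ : ℝ) (k : ℕ) :
    ENNReal.ofReal ((v / ρ ^ k) ^ σ) = ENNReal.ofReal (v ^ σ) *
      (ENNReal.ofReal (ρ ^ (-(σ / 2))) ^ k * ENNReal.ofReal (ρ ^ (-(σ / 2))) ^ k) := by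
  have hsplit : (ρ ^ σ)⁻¹ = ρ ^ (-(σ / 2)) * ρ ^ (-(σ / 2)) := by
    rw [Real.rpow_neg hρ, ← mul_inv, ← sq, ← Real.rpow_mul_natCast hρ]
    simp
  rw [← mul_pow, ← ENNReal.ofReal_mul (by positivity), ← hsplit,
    ← ENNReal.ofReal_pow (by positivity), ← ENNReal.ofReal_mul (by positivity),
    Real.div_rpow hv (by positivity), inv_pow, ← div_eq_mul_inv, Real.rpow_pow_comm hρ]

lemma setLIntegral_enorm_rpow_le_iSup_lorentzProfile {σ ρ Q v : ℝ} (hρ : 1 < ρ) (hQ : 0 < Q)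
    (hQp : 1 / Q = σ + 1 / p) {g : Euc n → ℝ} (hg : Measurable g) {A : Set (Euc n)}
    (hA : MeasurableSet A) (hv : 0 < v) (hvA : volume A ≤ ENNReal.ofReal v) :
    ∫⁻ x in A, ‖g x‖ₑ ^ Q ≤
      (ENNReal.ofReal ρ * ∑' m : ℕ, (ENNReal.ofReal (ρ ^ (-(σ / 2))) ^ (m + 1)) ^ Q) *
        (ENNReal.ofReal (v ^ σ) * ⨆ m : ℕ, ENNReal.ofReal (ρ ^ (-(σ / 2))) ^ (m + 1) *
          lorentzProfile n p g (v / ρ ^ (m + 1))) ^ Q := by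
  have hρ₀ : 0 < ρ := one_pos.trans hρ
  set θ := ENNReal.ofReal (ρ ^ (-(σ / 2)))
  set c : ℕ → ℝ≥0∞ := fun m ↦ lorentzProfile n p g (v / ρ ^ (m + 1))
  have profile_eq (m : ℕ) : lorentzProfile n Q g (v / ρ ^ (m + 1)) =
      ENNReal.ofReal (v ^ σ) * (θ ^ (m + 1) * (θ ^ (m + 1) * c m)) := by
    rw [lorentzProfile_eq_rpow_mul hQp g (by positivity), ofReal_div_pow_rpow hv.le hρ₀.le,
      mul_assoc, mul_assoc]
  calc ∫⁻ x in A, ‖g x‖ₑ ^ Q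
      ≤ ENNReal.ofReal ρ * ∑' m : ℕ, lorentzProfile n Q g (v / ρ ^ (m + 1)) ^ Q :=
        setLIntegral_enorm_rpow_le_tsum_lorentzProfile hg hA hv hρ hQ hvA
    _ = ENNReal.ofReal ρ * (ENNReal.ofReal (v ^ σ) ^ Q *
          ∑' m, (θ ^ (m + 1) * (θ ^ (m + 1) * c m)) ^ Q) := by
        simp only [profile_eq, ENNReal.mul_rpow_of_nonneg (ENNReal.ofReal _) _ hQ.le,
          ENNReal.tsum_mul_left]
    _ ≤ ENNReal.ofReal ρ * (ENNReal.ofReal (v ^ σ) ^ Q *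
          ((∑' m : ℕ, (θ ^ (m + 1)) ^ Q) * (⨆ m, θ ^ (m + 1) * c m) ^ Q)) := by
        gcongr
        exact tsum_mul_mul_rpow_le _ _ hQ.le
    _ = _ := by
        rw [ENNReal.mul_rpow_of_nonneg _ _ hQ.le]
        ring

lemma ofReal_rpow_neg_half_lt_one {σ ρ : ℝ} (hσ : 0 < σ) (hρ : 1 < ρ) :
    ENNReal.ofReal (ρ ^ (-(σ / 2))) < 1 :=
  ENNReal.ofReal_lt_one.2 (Real.rpow_lt_one_of_one_lt_of_neg hρ (by linarith))

lemma exists_eLpNorm_indicator_le_iSup_lorentzProfile (n : ℕ) {σ ρ : ℝ} (hσ : 0 < σ) (hρ : 1 < ρ)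
    {q : ℝ≥0∞} (hq₀ : q ≠ 0) (hq : q ≠ ∞) (hqp : 1 / q.toReal = σ + 1 / p) :
    ∃ C : ℝ≥0, ∀ g : Euc n → ℝ, Measurable g → ∀ A : Set (Euc n), MeasurableSet A →
      ∀ v : ℝ, 0 < v → volume A ≤ ENNReal.ofReal v →
        eLpNorm (A.indicator g) q volume ≤ C * (ENNReal.ofReal (v ^ σ) *
          ⨆ m : ℕ, ENNReal.ofReal (ρ ^ (-(σ / 2))) ^ (m + 1) *
            lorentzProfile n p g (v / ρ ^ (m + 1))) := by
  have hQ := ENNReal.toReal_pos hq₀ hq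
  set Q := q.toReal
  have hsum := tsum_geometric_rpow_ne_top (ofReal_rpow_neg_half_lt_one hσ hρ) hQ
  lift (ENNReal.ofReal ρ * ∑' m : ℕ, (ENNReal.ofReal (ρ ^ (-(σ / 2))) ^ (m + 1)) ^ Q) ^ (1 / Q)
    to ℝ≥0 using by finiteness with C hC
  refine ⟨C, fun g hg A hA v hv hvA ↦ ?_⟩
  rw [hC, eLpNorm_indicator_eq_eLpNorm_restrict hA,
    eLpNorm_eq_lintegral_rpow_enorm_toReal hq₀ hq]
  refine (ENNReal.rpow_le_rpow (setLIntegral_enorm_rpow_le_iSup_lorentzProfile hρ hQ hqp hg hA hv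
    hvA) (by positivity)).trans_eq ?_
  rw [ENNReal.mul_rpow_of_nonneg _ _ (by positivity), one_div, ENNReal.rpow_rpow_inv hQ.ne']

end Lorentz

section Herz

variable {n : ℕ} {r : ℝ≥0∞}

lemma herzNorm_eq_eLpNorm_count (n : ℕ) (s : ℝ) (q : ℝ≥0∞) (hr : r ≠ 0) (f : Euc n → ℝ) :
    herzNorm n s q r f = eLpNorm (fun j : ℤ ↦ ENNReal.ofReal (2 ^ ((j : ℝ) * s)) *
      eLpNorm ((annulus n j).indicator f) q volume) r Measure.count := by
  rcases eq_or_ne r ∞ with rfl | hr'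
  · rw [eLpNorm_top_count]
    exact if_pos rfl
  · rw [eLpNorm_count_eq_tsum _ hr hr']
    exact if_neg hr'

lemma measurableSet_annulus (n : ℕ) (j : ℤ) : MeasurableSet (annulus n j) :=
  (measurableSet_le measurable_const measurable_norm).inter
    (measurableSet_lt measurable_norm measurable_const)

lemma volume_annulus_le (n : ℕ) (j : ℤ) :
    volume (annulus n j) ≤
      ENNReal.ofReal (volume.real (Metric.ball (0 : Euc n) 1) * (2 ^ n) ^ j) :=
  calc volume (annulus n j)
      ≤ volume (Metric.ball (0 : Euc n) (2 ^ j)) :=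
        measure_mono fun x hx ↦ mem_ball_zero_iff.2 hx.2
    _ = ENNReal.ofReal (volume.real (Metric.ball (0 : Euc n) 1) * (2 ^ n) ^ j) := by
        rw [Measure.addHaar_ball_of_pos _ _ (by positivity), finrank_euclideanSpace_fin,
          ENNReal.ofReal_mul measureReal_nonneg, ofReal_measureReal measure_ball_lt_top.ne,
          mul_comm, ← zpow_natCast, ← zpow_natCast, zpow_comm]

lemma volume_real_unit_ball_pos (n : ℕ) : 0 < volume.real (Metric.ball (0 : Euc n) 1) :=
  ENNReal.toReal_pos (Metric.measure_ball_pos _ _ one_pos).ne' measure_ball_lt_top.ne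

lemma two_rpow_le_norm_rpow_of_mem_annulus {j : ℤ} {x : Euc n} (hx : x ∈ annulus n j) (t : ℝ) :
    (2 : ℝ) ^ (j * t - |t|) ≤ ‖x‖ ^ t := by
  have hlow : (2 : ℝ) ^ ((j : ℝ) - 1) ≤ ‖x‖ := by exact_mod_cast hx.1
  have hup : ‖x‖ ≤ (2 : ℝ) ^ (j : ℝ) := by exact_mod_cast hx.2.le
  rcases le_total 0 t with ht | ht
  · calc (2 : ℝ) ^ (j * t - |t|) = ((2 : ℝ) ^ ((j : ℝ) - 1)) ^ t := by
          rw [← Real.rpow_mul zero_le_two, abs_of_nonneg ht, sub_one_mul]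
      _ ≤ ‖x‖ ^ t := by gcongr
  · calc (2 : ℝ) ^ (j * t - |t|) ≤ 2 ^ (j * t) := by
          gcongr
          · exact one_le_two
          · exact sub_le_self _ (abs_nonneg t)
      _ = ((2 : ℝ) ^ (j : ℝ)) ^ t := Real.rpow_mul zero_le_two _ _
      _ ≤ ‖x‖ ^ t := Real.rpow_le_rpow_of_nonpos (lt_of_lt_of_le (by positivity) hlow) hup ht

lemma eLpNorm_indicator_annulus_le (f : Euc n → ℝ) (t : ℝ) (q : ℝ≥0∞) (j : ℤ) :
    eLpNorm ((annulus n j).indicator f) q volume ≤ ENNReal.ofReal (2 ^ (|t| - j * t)) *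
      eLpNorm ((annulus n j).indicator fun x ↦ ‖x‖ ^ t * f x) q volume := by
  refine eLpNorm_le_mul_eLpNorm_of_ae_le_mul (.of_forall fun x ↦ ?_) q
  by_cases hx : x ∈ annulus n j
  · rw [indicator_of_mem hx, indicator_of_mem hx, norm_mul (‖x‖ ^ t),
      Real.norm_of_nonneg (Real.rpow_nonneg (norm_nonneg x) t), ← mul_assoc]
    refine le_mul_of_one_le_left (norm_nonneg _) ?_
    calc (1 : ℝ) = 2 ^ (|t| - j * t) * 2 ^ (j * t - |t|) := by
          rw [← Real.rpow_add two_pos, sub_add_sub_cancel, sub_self, Real.rpow_zero]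
      _ ≤ 2 ^ (|t| - j * t) * ‖x‖ ^ t := by
          gcongr
          exact two_rpow_le_norm_rpow_of_mem_annulus hx t
  · simp [hx]

lemma herzNorm_le_mul_herzNorm_norm_rpow_mul (s t : ℝ) (q : ℝ≥0∞) (hr : r ≠ 0)
    (f : Euc n → ℝ) :
    herzNorm n s q r f ≤
      ENNReal.ofReal (2 ^ |t|) * herzNorm n (s - t) q r (fun x ↦ ‖x‖ ^ t * f x) := by
  rw [herzNorm_eq_eLpNorm_count n s q hr, herzNorm_eq_eLpNorm_count n (s - t) q hr]
  refine eLpNorm_count_le_mul (fun j ↦ ?_) r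
  refine (mul_le_mul_right (eLpNorm_indicator_annulus_le f t q j) _).trans_eq ?_
  have hexp : (j : ℝ) * s + (|t| - j * t) = |t| + j * (s - t) := by ring
  rw [← mul_assoc, ← ENNReal.ofReal_mul (by positivity), ← Real.rpow_add two_pos, hexp,
    Real.rpow_add two_pos, ENNReal.ofReal_mul (by positivity), mul_assoc]
  rfl

lemma exists_ofReal_mul_eLpNorm_indicator_annulus_le (hn : n ≠ 0) {σ p : ℝ} {q : ℝ≥0∞} (hσ : 0 < σ)
    (hq₀ : q ≠ 0) (hq : q ≠ ∞) (hqp : 1 / q.toReal = σ + 1 / p) :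
    ∃ C : ℝ≥0, ∀ g : Euc n → ℝ, Measurable g → ∀ j : ℤ,
      ENNReal.ofReal (2 ^ (j * -(n * σ))) * eLpNorm ((annulus n j).indicator g) q volume ≤
        C * ⨆ m : ℕ, ENNReal.ofReal ((2 ^ n) ^ (-(σ / 2))) ^ (m + 1) *
          lorentzProfile n p g
            (volume.real (Metric.ball (0 : Euc n) 1) * (2 ^ n) ^ (j - (m + 1))) := by
  have hρ : (1 : ℝ) < 2 ^ n := one_lt_pow₀ _root_.one_lt_two hn
  set ω := volume.real (Metric.ball (0 : Euc n) 1)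
  have hω : 0 < ω := volume_real_unit_ball_pos n
  obtain ⟨C, hC⟩ := exists_eLpNorm_indicator_le_iSup_lorentzProfile n hσ hρ hq₀ hq hqp
  refine ⟨(ω ^ σ).toNNReal * C, fun g hg j ↦ ?_⟩
  have rescale (m : ℕ) :
      ω * (2 ^ n) ^ j / (2 ^ n) ^ (m + 1) = ω * ((2 : ℝ) ^ n) ^ (j - (m + 1)) := by
    rw [mul_div_assoc, zpow_sub₀ (by positivity)]
    norm_cast
  have weight : (2 : ℝ) ^ (j * -(n * σ)) * (ω * (2 ^ n) ^ j) ^ σ = ω ^ σ := by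
    have hpow : (((2 : ℝ) ^ n) ^ j) ^ σ = 2 ^ (j * (n * σ)) := by
      rw [← Real.rpow_natCast, ← Real.rpow_intCast, ← Real.rpow_mul zero_le_two,
        ← Real.rpow_mul zero_le_two]
      ring_nf
    rw [Real.mul_rpow hω.le (by positivity), hpow, mul_left_comm, ← Real.rpow_add two_pos,
      ← mul_add, neg_add_cancel, mul_zero, Real.rpow_zero, mul_one]
  have annulus_le := hC g hg _ (measurableSet_annulus n j) (ω * (2 ^ n) ^ j)
    (by positivity) (volume_annulus_le n j)
  simp only [rescale] at annulus_le
  refine (mul_le_mul_right annulus_le _).trans_eq ?_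
  rw [mul_left_comm, ← mul_assoc (ENNReal.ofReal _), ← ENNReal.ofReal_mul (by positivity), weight,
    ENNReal.coe_mul, ENNReal.ofReal, mul_assoc, mul_left_comm]

theorem exists_herzNorm_le_lorentzNorm (hn : n ≠ 0) {σ p : ℝ} {q : ℝ≥0∞} (hσ : 0 < σ)
    (hp : 0 ≤ p) (hr : r ≠ 0) (hqp : q⁻¹.toReal = σ + 1 / p) :
    ∃ C : ℝ≥0, ∀ g : Euc n → ℝ, Measurable g →
      herzNorm n (-(n * σ)) q r g ≤ C * lorentzNorm n p r g := by
  obtain ⟨hq₀, hq⟩ : q ≠ 0 ∧ q ≠ ∞ := by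
    have : 0 < q⁻¹.toReal := by rw [hqp]; positivity
    simpa [ENNReal.toReal_pos_iff, pos_iff_ne_zero, lt_top_iff_ne_top] using this
  have hρ : (1 : ℝ) < 2 ^ n := one_lt_pow₀ _root_.one_lt_two hn
  rw [ENNReal.toReal_inv, ← one_div] at hqp
  obtain ⟨C₁, hC₁⟩ := exists_ofReal_mul_eLpNorm_indicator_annulus_le hn hσ hq₀ hq hqp
  obtain ⟨C₂, hC₂⟩ := exists_eLpNorm_count_iSup_geometric_le (ofReal_rpow_neg_half_lt_one hσ hρ) r
  obtain ⟨C₃, hC₃⟩ := exists_eLpNorm_count_lorentzProfile_le n hp r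
    (volume_real_unit_ball_pos n) hρ
  refine ⟨C₁ * (C₂ * C₃), fun g hg ↦ ?_⟩
  rw [herzNorm_eq_eLpNorm_count n _ q hr]
  refine (eLpNorm_count_le_mul (hC₁ g hg) r).trans ?_
  rw [ENNReal.coe_mul, ENNReal.coe_mul, mul_assoc, mul_assoc]
  exact mul_le_mul_right ((hC₂ _).trans (mul_le_mul_right (hC₃ g) _)) _

end Herz

/-- If `s < s̃` and `s/n + 1/q = s̃/n + 1/p`, the power-weighted Lorentz space
`L^{p,r}_{s̃}(ℝⁿ)` embeds continuously into the Herz space `K̇^s_{q,r}(ℝⁿ)`. -/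
theorem lorentz_embeds_herz
    (n : ℕ) (hn : 1 ≤ n) (s st p : ℝ) (q r : ℝ≥0∞)
    (hp : 0 < p) (hq : 0 < q) (hr : 0 < r)
    (hss : s < st)
    (he : s / (n : ℝ) + (q⁻¹).toReal = st / (n : ℝ) + 1 / p) :
    ∃ C : ℝ, 0 < C ∧ ∀ f : Euc n → ℝ, Measurable f →
      herzNorm n s q r f ≤ ENNReal.ofReal C * lorentzNormW n st p r f := by
  have hn₀ : (n : ℝ) ≠ 0 := by positivity
  have hσ : 0 < (st - s) / n := div_pos (sub_pos.2 hss) (by positivity)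
  have hqp : q⁻¹.toReal = (st - s) / n + 1 / p := by
    rw [sub_div]
    linarith
  have hst : s - st = -(n * ((st - s) / n)) := by
    rw [mul_div_cancel₀ _ hn₀, neg_sub]
  obtain ⟨C, hC⟩ := exists_herzNorm_le_lorentzNorm (Nat.one_le_iff_ne_zero.1 hn) hσ hp.le hr.ne' hqp
  refine ⟨2 ^ |st| * (C + 1), by positivity, fun f hf ↦ ?_⟩
  calc herzNorm n s q r f
      ≤ ENNReal.ofReal (2 ^ |st|) * herzNorm n (s - st) q r (fun x ↦ ‖x‖ ^ st * f x) :=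
        herzNorm_le_mul_herzNorm_norm_rpow_mul s st q hr.ne' f
    _ ≤ ENNReal.ofReal (2 ^ |st|) * (C * lorentzNormW n st p r f) := by
        rw [hst]
        gcongr
        exact hC _ ((measurable_norm.pow_const st).mul hf)
    _ ≤ ENNReal.ofReal (2 ^ |st| * (C + 1)) * lorentzNormW n st p r f := by
        rw [← mul_assoc, ENNReal.ofReal_mul (by positivity)]
        gcongr
        exact (ENNReal.ofReal_coe_nnreal (p := C)).symm.trans_le
          (ENNReal.ofReal_le_ofReal (by linarith))
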